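/- Let p be a prime, k a field of characteristic p, and A = k[x_1,…,x_n] graded by deg(x_i) = −1. Let f : M → N be a morphism of free p-DG A-modules such that M_n = N_n = 0 for all sufficiently large n. If f⊗_A k is a quasi-isomorphism of p-complexes (i.e. induces isomorphisms on {}_sH_• for all 1 ≤ s ≤ p−1), then f is a homotopy equivalence of p-DG A-modules. -/

import Mathlib

/-! Statement 17: Let `f : M → N` be a morphism of free `p`-DG `A`-modules with
`M_n = N_n = 0` for all large `n`.  If `f ⊗_A k` is a quasi-isomorphism of `p`-complexes
(isomorphisms on `ₛH` for all `1 ≤ s ≤ p-1`), then `f` is a homotopy equivalence of `p`-DG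
`A`-modules. -/

/-- The polynomial ring `A = k[x_1,…,x_n]` (graded by `deg x_i = -1` via the gradings below). -/
abbrev PolyA (n : ℕ) (k : Type) [Field k] : Type := MvPolynomial (Fin n) k

/-- A `p`-DG module over `A = k[x_1,…,x_n]` with `deg x_i = -1`: a graded `A`-module together
with an `A`-linear differential of degree `-1` satisfying `d ^ p = 0`. -/
structure PDG (p n : ℕ) (k : Type) [Field k] : Type 1 where
  X : Type
  [acg : AddCommGroup X]
  [modA : Module (PolyA n k) X]
  [modk : Module k X]
  [tower : IsScalarTower k (PolyA n k) X]
  d : X →ₗ[PolyA n k] X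
  gr : ℤ → Submodule k X
  internal : DirectSum.IsInternal gr
  x_deg : ∀ (i : Fin n) (m : ℤ), ∀ x ∈ gr m, (MvPolynomial.X i : PolyA n k) • x ∈ gr (m - 1)
  d_deg : ∀ m : ℤ, ∀ x ∈ gr m, d x ∈ gr (m - 1)
  d_pow : d ^ p = 0

attribute [instance] PDG.acg PDG.modA PDG.modk PDG.tower

namespace PDG
variable {p n : ℕ} {k : Type} [Field k] (M : PDG p n k)

/-- `M` is free as a graded `A`-module: it has a homogeneous `A`-basis. -/
def IsFree : Prop :=
  ∃ (ι : Type) (deg : ι → ℤ) (b : Module.Basis ι (PolyA n k) M.X), ∀ a, b a ∈ M.gr (deg a)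

/-- `M` is free and finitely generated as a graded `A`-module. -/
def IsFreeFG : Prop :=
  ∃ (ι : Type) (_ : Fintype ι) (deg : ι → ℤ) (b : Module.Basis ι (PolyA n k) M.X),
    ∀ a, b a ∈ M.gr (deg a)

/-- The submodule `(x_1,…,x_n)·M`, i.e. the kernel of `M → M ⊗_A k`. -/
noncomputable def IM : Submodule (PolyA n k) M.X :=
  (Ideal.span (Set.range (MvPolynomial.X : Fin n → PolyA n k))) • (⊤ : Submodule (PolyA n k) M.X)

/-- The differential as a `k`-linear map. -/
noncomputable def dk : M.X →ₗ[k] M.X := M.d.restrictScalars k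

/-- `(x_1,…,x_n)·M` as a `k`-subspace. -/
noncomputable def IMk : Submodule k M.X := M.IM.restrictScalars k

/-- The total homology `ₛH(M) = ker d^s / im d^{p-s}` as a `k`-vector space. -/
noncomputable abbrev H (s : ℕ) : Type :=
  ↥(LinearMap.ker (M.dk ^ s)) ⧸
    (LinearMap.range (M.dk ^ (p - s))).comap (LinearMap.ker (M.dk ^ s)).subtype

/-- The total homology `ₛH(M ⊗_A k)` as a `k`-vector space, presented as the subquotient
`ker(d̄^s) / im(d̄^{p-s})` of `M/IM` pulled back to `M`. -/
noncomputable abbrev HBar (s : ℕ) : Type :=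
  ↥(Submodule.comap (M.dk ^ s) M.IMk) ⧸
    (LinearMap.range (M.dk ^ (p - s)) ⊔ M.IMk).comap (Submodule.comap (M.dk ^ s) M.IMk).subtype

/-- `ₛH(M ⊗_A k) ≠ 0`. -/
def HBarNonzero (s : ℕ) : Prop :=
  ∃ x : M.X, (M.dk ^ s) x ∈ M.IMk ∧ x ∉ LinearMap.range (M.dk ^ (p - s)) ⊔ M.IMk

end PDG

/-!
Let `T = k[d]/(d ^ p) ⊗ N`. It is contractible and maps onto `N` by the action of `d`, so `f` may be
replaced by the surjection `M ⊕ T → N`, which is split as a map of `A`-modules. The kernel `K` of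
this surjection is then a projective `A`-module, and `K ⊗_A k` is acyclic.

Acyclicity over the field `k` provides `h` such that `d ^ (p - 1) ∘ h` is the identity on cycles of
`K ⊗_A k`. Lift it to a homogeneous `A`-linear map on `K`, and let `ν` be the difference of the
identity and the null-homotopic map of `h`. Since `ν` vanishes on cycles modulo `(x_1, …, x_n)`,
`ν ^ p` vanishes modulo `(x_1, …, x_n)` on all of `K`. So each `ν ^ p` pulls out a variable and is
left with an element of higher degree, and the bound on the degrees makes `ν` locally nilpotent.
Hence the null-homotopic map `1 - ν` is an automorphism and `K` is contractible, which makes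
`M ⊕ T → N` and `f` homotopy equivalences. Homogeneous components of the inverse and of the
homotopies have the required degrees.
-/

/-! ### Null-homotopic maps and contractibility -/

section NullHomotopic

variable {R X Y Z : Type*} [Ring R] [AddCommGroup X] [Module R X] [AddCommGroup Y] [Module R Y]
  [AddCommGroup Z] [Module R Z] {q : ℕ} {dX : Module.End R X} {dY : Module.End R Y}
  {dZ : Module.End R Z}

/-- The null-homotopic map attached to `h`, for differentials with `d ^ (q + 1) = 0`. The order of
nilpotency is written `q + 1` to keep truncated subtraction out of the exponents. -/
def nullHomotopicMap (q : ℕ) (dX : Module.End R X) (dY : Module.End R Y) (h : X →ₗ[R] Y) :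
    X →ₗ[R] Y :=
  ∑ i ∈ Finset.range (q + 1), (dY ^ (q - i)) ∘ₗ h ∘ₗ (dX ^ i)

theorem nullHomotopicMap_apply (h : X →ₗ[R] Y) (x : X) :
    nullHomotopicMap q dX dY h x =
      ∑ i ∈ Finset.range (q + 1), (dY ^ (q - i)) (h ((dX ^ i) x)) := by
  simp [nullHomotopicMap]

theorem nullHomotopicMap_neg (h : X →ₗ[R] Y) :
    nullHomotopicMap q dX dY (-h) = -nullHomotopicMap q dX dY h := by
  simp [nullHomotopicMap, LinearMap.neg_comp, LinearMap.comp_neg]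

theorem map_differential_pow {f : X →ₗ[R] Y} (hf : f ∘ₗ dX = dY ∘ₗ f) (i : ℕ) (x : X) :
    f ((dX ^ i) x) = (dY ^ i) (f x) :=
  (LinearMap.congr_fun (Module.End.commute_pow_left_of_commute hf.symm i) x).symm

theorem comp_nullHomotopicMap {f : Y →ₗ[R] Z} (hf : f ∘ₗ dY = dZ ∘ₗ f) (h : X →ₗ[R] Y) :
    f ∘ₗ nullHomotopicMap q dX dY h = nullHomotopicMap q dX dZ (f ∘ₗ h) := by
  ext x
  simp [nullHomotopicMap_apply, map_differential_pow hf]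

theorem nullHomotopicMap_comp {f : X →ₗ[R] Y} (hf : f ∘ₗ dX = dY ∘ₗ f) (h : Y →ₗ[R] Z) :
    nullHomotopicMap q dY dZ h ∘ₗ f = nullHomotopicMap q dX dZ (h ∘ₗ f) := by
  ext x
  simp [nullHomotopicMap_apply, map_differential_pow hf]

theorem nullHomotopicMap_comp_differential (hX : dX ^ (q + 1) = 0) (hY : dY ^ (q + 1) = 0)
    (h : X →ₗ[R] Y) :
    nullHomotopicMap q dX dY h ∘ₗ dX = dY ∘ₗ nullHomotopicMap q dX dY h := by
  ext x
  simp only [LinearMap.comp_apply, nullHomotopicMap_apply, map_sum, ← Module.End.mul_apply,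
    ← pow_succ, ← pow_succ']
  rw [Finset.sum_range_succ, Finset.sum_range_succ', hX, Nat.sub_zero, hY]
  simp only [LinearMap.zero_apply, map_zero]
  congr 1
  refine Finset.sum_congr rfl fun i hi => ?_
  rw [← Nat.sub_sub, Nat.sub_add_cancel (Nat.sub_pos_of_lt (Finset.mem_range.1 hi))]

/-- Contractibility of a module with differential `d`, where `d ^ (q + 1) = 0`: the identity is
null-homotopic. -/
def IsContractible (q : ℕ) (d : Module.End R X) : Prop :=
  ∃ h : Module.End R X, nullHomotopicMap q d d h = LinearMap.id

theorem isContractible_of_bijective_nullHomotopicMap (hX : dX ^ (q + 1) = 0) {h : Module.End R X}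
    (hbij : Function.Bijective (nullHomotopicMap q dX dX h)) : IsContractible q dX := by
  let θ := LinearEquiv.ofBijective _ hbij
  have hθ : (θ : X →ₗ[R] X) ∘ₗ dX = dX ∘ₗ θ := nullHomotopicMap_comp_differential hX hX h
  have hθsymm : (θ.symm : X →ₗ[R] X) ∘ₗ dX = dX ∘ₗ θ.symm := by
    rw [LinearEquiv.toLinearMap_symm_comp_eq, ← LinearMap.comp_assoc, hθ, LinearMap.comp_assoc,
      LinearEquiv.comp_symm, LinearMap.comp_id]
  refine ⟨h ∘ₗ θ.symm, ?_⟩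
  rw [← nullHomotopicMap_comp hθsymm]
  exact θ.comp_symm

/-- Homotopy equivalences of modules with differentials satisfying `d ^ (q + 1) = 0`, without any
grading. -/
def IsHomotopyEquiv (q : ℕ) (dX : Module.End R X) (dY : Module.End R Y) (f : X →ₗ[R] Y) : Prop :=
  ∃ g : Y →ₗ[R] X, g ∘ₗ dY = dX ∘ₗ g ∧
    (∃ h, g ∘ₗ f - LinearMap.id = nullHomotopicMap q dX dX h) ∧
    ∃ h, f ∘ₗ g - LinearMap.id = nullHomotopicMap q dY dY h

/-- The differential induced on the kernel of a chain map. -/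
def kerEnd {f : X →ₗ[R] Y} (hf : f ∘ₗ dX = dY ∘ₗ f) : Module.End R (LinearMap.ker f) :=
  dX.restrict fun x hx => by
    rw [LinearMap.mem_ker] at hx ⊢
    rw [← LinearMap.comp_apply, hf, LinearMap.comp_apply, hx, map_zero]

theorem subtype_comp_kerEnd {f : X →ₗ[R] Y} (hf : f ∘ₗ dX = dY ∘ₗ f) :
    (LinearMap.ker f).subtype ∘ₗ kerEnd hf = dX ∘ₗ (LinearMap.ker f).subtype := rfl

theorem coe_kerEnd_pow_apply {f : X →ₗ[R] Y} (hf : f ∘ₗ dX = dY ∘ₗ f) (j : ℕ)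
    (x : LinearMap.ker f) : ((kerEnd hf ^ j) x : X) = (dX ^ j) x :=
  map_differential_pow (subtype_comp_kerEnd hf) j x

theorem kerEnd_pow_eq_zero {f : X →ₗ[R] Y} (hf : f ∘ₗ dX = dY ∘ₗ f) {j : ℕ} (hX : dX ^ j = 0) :
    kerEnd hf ^ j = 0 := by
  ext x
  simp [coe_kerEnd_pow_apply, hX]

/-- The projection onto the kernel of `f` along the range of a linear section `s`. -/
def kerRetraction {f : X →ₗ[R] Y} {s : Y →ₗ[R] X} (hs : f ∘ₗ s = LinearMap.id) :
    X →ₗ[R] LinearMap.ker f :=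
  (LinearMap.id - s ∘ₗ f).codRestrict _ fun x => by
    rw [LinearMap.mem_ker, LinearMap.sub_apply, map_sub, LinearMap.comp_apply,
      LinearMap.id_apply, ← LinearMap.comp_apply f s, hs, LinearMap.id_apply, sub_self]

theorem subtype_comp_kerRetraction {f : X →ₗ[R] Y} {s : Y →ₗ[R] X}
    (hs : f ∘ₗ s = LinearMap.id) :
    (LinearMap.ker f).subtype ∘ₗ kerRetraction hs = LinearMap.id - s ∘ₗ f := rfl

theorem kerRetraction_comp_subtype {f : X →ₗ[R] Y} {s : Y →ₗ[R] X}
    (hs : f ∘ₗ s = LinearMap.id) :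
    kerRetraction hs ∘ₗ (LinearMap.ker f).subtype = LinearMap.id := by
  ext x
  simp [kerRetraction]

theorem projective_ker_of_comp_eq_id [Module.Projective R X] {f : X →ₗ[R] Y}
    {s : Y →ₗ[R] X} (hs : f ∘ₗ s = LinearMap.id) : Module.Projective R (LinearMap.ker f) :=
  Module.Projective.of_split _ _ (kerRetraction_comp_subtype hs)

theorem exists_chain_section_of_isContractible_kerEnd {f : X →ₗ[R] Y} {s : Y →ₗ[R] X}
    (hX : dX ^ (q + 1) = 0) (hf : f ∘ₗ dX = dY ∘ₗ f) (hs : f ∘ₗ s = LinearMap.id)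
    (hker : IsContractible q (kerEnd hf)) :
    ∃ σ : Y →ₗ[R] X, f ∘ₗ σ = LinearMap.id ∧ σ ∘ₗ dY = dX ∘ₗ σ ∧
      ∃ h, LinearMap.id - σ ∘ₗ f = nullHomotopicMap q dX dX h := by
  obtain ⟨c, hc⟩ := hker
  let ι := (LinearMap.ker f).subtype
  have hι : ι ∘ₗ kerEnd hf = dX ∘ₗ ι := subtype_comp_kerEnd hf
  let ρ := nullHomotopicMap q dX (kerEnd hf) (c ∘ₗ kerRetraction hs)
  have hρι : ρ ∘ₗ ι = LinearMap.id := by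
    rw [nullHomotopicMap_comp hι, LinearMap.comp_assoc, kerRetraction_comp_subtype,
      LinearMap.comp_id, hc]
  have hρd : ρ ∘ₗ dX = kerEnd hf ∘ₗ ρ :=
    nullHomotopicMap_comp_differential hX (kerEnd_pow_eq_zero hf hX) _
  let π : Module.End R X := LinearMap.id - ι ∘ₗ ρ
  have hπd : π ∘ₗ dX = dX ∘ₗ π := by
    rw [LinearMap.sub_comp, LinearMap.comp_sub, LinearMap.comp_assoc, hρd,
      ← LinearMap.comp_assoc, hι, LinearMap.comp_assoc, LinearMap.id_comp, LinearMap.comp_id]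
  have hπι : π ∘ₗ ι = 0 := by
    rw [LinearMap.sub_comp, LinearMap.comp_assoc, hρι, LinearMap.id_comp, LinearMap.comp_id,
      sub_self]
  have hπsf : (π ∘ₗ s) ∘ₗ f = π := by
    rw [LinearMap.comp_assoc, ← sub_sub_cancel LinearMap.id (s ∘ₗ f),
      ← subtype_comp_kerRetraction hs, LinearMap.comp_sub, ← LinearMap.comp_assoc, hπι,
      LinearMap.zero_comp, sub_zero, LinearMap.comp_id]
  refine ⟨π ∘ₗ s, ?_, ?_, ι ∘ₗ c ∘ₗ kerRetraction hs, ?_⟩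
  · rw [← LinearMap.comp_assoc, LinearMap.comp_sub, ← LinearMap.comp_assoc,
      LinearMap.comp_ker_subtype, LinearMap.zero_comp, sub_zero, LinearMap.comp_id, hs]
  · have hcomm : (π ∘ₗ s) ∘ₗ dY ∘ₗ f = dX ∘ₗ (π ∘ₗ s) ∘ₗ f := by
      rw [← hf, ← LinearMap.comp_assoc, hπsf, hπd]
    simpa only [LinearMap.comp_assoc, hs, LinearMap.comp_id] using congrArg (· ∘ₗ s) hcomm
  · rw [hπsf, sub_sub_cancel, ← comp_nullHomotopicMap hι]

theorem prodMap_pow (dX : Module.End R X) (dY : Module.End R Y) (j : ℕ) :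
    dX.prodMap dY ^ j = (dX ^ j).prodMap (dY ^ j) :=
  (map_pow (LinearMap.prodMapRingHom R X Y) (dX, dY) j).symm

theorem prodMap_pow_eq_zero {j : ℕ} (hX : dX ^ j = 0) (hY : dY ^ j = 0) :
    dX.prodMap dY ^ j = 0 := by
  rw [prodMap_pow, hX, hY, LinearMap.prodMap_zero]

theorem coprod_comp_prodMap {f : X →ₗ[R] Z} {g : Y →ₗ[R] Z} (hf : f ∘ₗ dX = dZ ∘ₗ f)
    (hg : g ∘ₗ dY = dZ ∘ₗ g) : f.coprod g ∘ₗ dX.prodMap dY = dZ ∘ₗ f.coprod g := by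
  rw [LinearMap.comp_coprod, ← hf, ← hg]
  ext x <;> simp

theorem coprod_comp_inr_comp (f : X →ₗ[R] Z) {g : Y →ₗ[R] Z} {s : Z →ₗ[R] Y}
    (hs : g ∘ₗ s = LinearMap.id) : f.coprod g ∘ₗ LinearMap.inr R X Y ∘ₗ s = LinearMap.id := by
  rw [← LinearMap.comp_assoc, LinearMap.coprod_inr, hs]

/- `X ⊕ Y` is homotopy equivalent to `X`, and a surjective chain map which is linearly split and has
contractible kernel is a homotopy equivalence; so `f` is one as the composite of the inclusion
`X → X ⊕ Y` with `f.coprod g`. -/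
theorem isHomotopyEquiv_of_isContractible_kerEnd_coprod {f : X →ₗ[R] Z} {g : Y →ₗ[R] Z}
    {s : Z →ₗ[R] Y} (hX : dX ^ (q + 1) = 0) (hY : dY ^ (q + 1) = 0) (hf : f ∘ₗ dX = dZ ∘ₗ f)
    (hg : g ∘ₗ dY = dZ ∘ₗ g) (hs : g ∘ₗ s = LinearMap.id) (hcontr : IsContractible q dY)
    (hker : IsContractible q (kerEnd (coprod_comp_prodMap hf hg))) :
    IsHomotopyEquiv q dX dZ f := by
  obtain ⟨c, hc⟩ := hcontr
  obtain ⟨σ, hσ, hσd, h, hh⟩ := exists_chain_section_of_isContractible_kerEnd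
    (prodMap_pow_eq_zero hX hY) (coprod_comp_prodMap hf hg) (coprod_comp_inr_comp f hs) hker
  have hfst : LinearMap.fst R X Y ∘ₗ dX.prodMap dY = dX ∘ₗ LinearMap.fst R X Y := rfl
  have hsnd : LinearMap.snd R X Y ∘ₗ dX.prodMap dY = dY ∘ₗ LinearMap.snd R X Y := rfl
  have hinl : LinearMap.inl R X Y ∘ₗ dX = dX.prodMap dY ∘ₗ LinearMap.inl R X Y := by
    ext x <;> simp
  have hsum : f ∘ₗ LinearMap.fst R X Y ∘ₗ σ + g ∘ₗ LinearMap.snd R X Y ∘ₗ σ = LinearMap.id := by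
    rw [← hσ]
    rfl
  refine ⟨LinearMap.fst R X Y ∘ₗ σ, ?_, ⟨-(LinearMap.fst R X Y ∘ₗ h ∘ₗ LinearMap.inl R X Y), ?_⟩,
    -(g ∘ₗ c ∘ₗ LinearMap.snd R X Y ∘ₗ σ), ?_⟩
  · rw [LinearMap.comp_assoc, hσd, ← LinearMap.comp_assoc, hfst, LinearMap.comp_assoc]
  · rw [nullHomotopicMap_neg, ← comp_nullHomotopicMap hfst, ← nullHomotopicMap_comp hinl, ← hh,
      LinearMap.sub_comp, LinearMap.comp_sub, neg_sub]
    congr 1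
    rw [LinearMap.comp_assoc, LinearMap.comp_assoc, LinearMap.coprod_inl]
  · have hchain : (LinearMap.snd R X Y ∘ₗ σ) ∘ₗ dZ = dY ∘ₗ LinearMap.snd R X Y ∘ₗ σ := by
      rw [LinearMap.comp_assoc, hσd, ← LinearMap.comp_assoc, hsnd, LinearMap.comp_assoc]
    rw [nullHomotopicMap_neg, ← comp_nullHomotopicMap hg, ← nullHomotopicMap_comp hchain, hc,
      LinearMap.id_comp, sub_eq_iff_eq_add, neg_add_eq_sub, eq_sub_iff_add_eq, hsum]

end NullHomotopic

section Shift

theorem projective_pi {R ι : Type*} [Ring R] [Finite ι] (X : ι → Type*)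
    [∀ i, AddCommGroup (X i)] [∀ i, Module R (X i)] [∀ i, Module.Projective R (X i)] :
    Module.Projective R (∀ i, X i) :=
  have := Fintype.ofFinite ι
  Module.Projective.of_equiv (DFinsupp.linearEquivFunOnFintype (R := R) (M := X))

variable {R N : Type*} [Ring R] [AddCommGroup N] [Module R N]

/-- The shift on `N ^ (q + 1)`, which is multiplication by `d` on `R[d]/(d ^ (q + 1)) ⊗ N`. -/
def shiftEnd (R N : Type*) [Ring R] [AddCommGroup N] [Module R N] (q : ℕ) :
    Module.End R (Fin (q + 1) → N) where
  toFun v := Fin.cons 0 fun j => v j.castSucc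
  map_add' v w := by
    ext i
    cases i using Fin.cases <;> simp
  map_smul' a v := by
    ext i
    cases i using Fin.cases <;> simp

theorem shiftEnd_apply_zero {q : ℕ} (v : Fin (q + 1) → N) : shiftEnd R N q v 0 = 0 := rfl

theorem shiftEnd_apply_succ {q : ℕ} (v : Fin (q + 1) → N) (j : Fin q) :
    shiftEnd R N q v j.succ = v j.castSucc := rfl

theorem shiftEnd_pow_apply {q : ℕ} (v : Fin (q + 1) → N) (j : ℕ) (i : Fin (q + 1)) :
    (shiftEnd R N q ^ j) v i = if j ≤ (i : ℕ) then v ⟨i - j, by omega⟩ else 0 := by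
  induction j generalizing i with
  | zero => simp
  | succ j ih =>
    rw [pow_succ', Module.End.mul_apply]
    cases i using Fin.cases with
    | zero => simp [shiftEnd_apply_zero]
    | succ l => simp [shiftEnd_apply_succ, ih]

theorem shiftEnd_pow_eq_zero (q : ℕ) : shiftEnd R N q ^ (q + 1) = 0 := by
  refine LinearMap.ext fun v => funext fun i => ?_
  rw [shiftEnd_pow_apply, if_neg (by omega)]
  rfl

theorem shiftEnd_pow_single_zero {q j : ℕ} (hj : j < q + 1) (y : N) :
    (shiftEnd R N q ^ j) (Pi.single 0 y) = Pi.single ⟨j, hj⟩ y := by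
  ext i
  rw [shiftEnd_pow_apply]
  simp only [Pi.single_apply, Fin.ext_iff, Fin.val_zero]
  split_ifs <;> first | rfl | omega

theorem isContractible_shiftEnd (q : ℕ) : IsContractible q (shiftEnd R N q) := by
  refine ⟨LinearMap.single R (fun _ => N) 0 ∘ₗ LinearMap.proj (Fin.last q), ?_⟩
  refine LinearMap.ext fun v => ?_
  have hterm (i : Fin (q + 1)) : (shiftEnd R N q ^ (q - (i : ℕ)))
      (Pi.single 0 ((shiftEnd R N q ^ (i : ℕ)) v (Fin.last q))) = Pi.single i.rev (v i.rev) := by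
    have hrev : (⟨q - i, by omega⟩ : Fin (q + 1)) = i.rev := by
      ext
      simp
    have hlast : (shiftEnd R N q ^ (i : ℕ)) v (Fin.last q) = v i.rev := by
      rw [shiftEnd_pow_apply]
      exact (if_pos (Nat.le_of_lt_succ i.isLt)).trans (congrArg v hrev)
    rw [hlast, shiftEnd_pow_single_zero (by omega), hrev]
  rw [nullHomotopicMap_apply, Finset.sum_range]
  exact (Finset.sum_congr rfl fun i _ => hterm i).trans
    ((Equiv.sum_comp Fin.revPerm fun i => Pi.single i (v i)).trans (Finset.univ_sum_single v))

/-- The action map `R[d]/(d ^ (q + 1)) ⊗ N → N`. -/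
def actionMap (q : ℕ) (d : Module.End R N) : (Fin (q + 1) → N) →ₗ[R] N :=
  ∑ i : Fin (q + 1), (d ^ (i : ℕ)) ∘ₗ LinearMap.proj i

theorem actionMap_apply (q : ℕ) (d : Module.End R N) (v : Fin (q + 1) → N) :
    actionMap q d v = ∑ i : Fin (q + 1), (d ^ (i : ℕ)) (v i) := by
  simp [actionMap]

theorem actionMap_comp_shiftEnd {q : ℕ} {d : Module.End R N} (hd : d ^ (q + 1) = 0) :
    actionMap q d ∘ₗ shiftEnd R N q = d ∘ₗ actionMap q d := by
  refine LinearMap.ext fun v => ?_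
  simp only [LinearMap.comp_apply, actionMap_apply, map_sum, ← Module.End.mul_apply, ← pow_succ']
  rw [Fin.sum_univ_succ, Fin.sum_univ_castSucc]
  simp [shiftEnd_apply_zero, shiftEnd_apply_succ, hd]

theorem actionMap_comp_single_zero (q : ℕ) (d : Module.End R N) :
    actionMap q d ∘ₗ LinearMap.single R (fun _ => N) 0 = LinearMap.id := by
  ext y
  simp [actionMap_apply, Fin.sum_univ_succ]

end Shift

/-! ### Homology modulo an ideal -/

section ModIdeal

variable {R X Y Z : Type*} [CommRing R] [AddCommGroup X] [Module R X] [AddCommGroup Y] [Module R Y]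
  [AddCommGroup Z] [Module R Z] {I : Ideal R} {q : ℕ} {dX : Module.End R X} {dY : Module.End R Y}
  {dZ : Module.End R Z}

theorem smodEq_smul_top_map (f : X →ₗ[R] Y) {x y : X} (h : x ≡ y [SMOD (I • ⊤ : Submodule R X)]) :
    f x ≡ f y [SMOD (I • ⊤ : Submodule R Y)] :=
  (h.map f).mono (Submodule.map_le_iff_le_comap.2 (Submodule.smul_top_le_comap_smul_top I f))

theorem smodEq_zero_smul_top_map (f : X →ₗ[R] Y) {x : X}
    (h : x ≡ 0 [SMOD (I • ⊤ : Submodule R X)]) : f x ≡ 0 [SMOD (I • ⊤ : Submodule R Y)] := by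
  simpa using smodEq_smul_top_map f h

theorem smodEq_smul_top_kernel {f : X →ₗ[R] Y} {s : Y →ₗ[R] X} (hs : f ∘ₗ s = LinearMap.id)
    {x y : LinearMap.ker f} (h : (x : X) ≡ y [SMOD (I • ⊤ : Submodule R X)]) :
    x ≡ y [SMOD (I • ⊤ : Submodule R (LinearMap.ker f))] := by
  have hret (z : LinearMap.ker f) : kerRetraction hs z = z :=
    LinearMap.congr_fun (kerRetraction_comp_subtype hs) z
  simpa only [hret] using smodEq_smul_top_map (kerRetraction hs) h

/-- Every cycle of `d` modulo `I` is a boundary of `d ^ q` modulo `I`: for `d ^ (q + 1) = 0`,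
this is the vanishing of `ker d / im (d ^ q)` for the reduction modulo `I`. -/
def IsAcyclicMod (I : Ideal R) (q : ℕ) (d : Module.End R X) : Prop :=
  ∀ x, d x ≡ 0 [SMOD (I • ⊤ : Submodule R X)] → ∃ y, x ≡ (d ^ q) y [SMOD (I • ⊤ : Submodule R X)]

/-- Modulo `I`, the map `f` is injective on `ker (d ^ s) / im (d ^ t)`. -/
def IsHomologyInjectiveMod (I : Ideal R) (s t : ℕ) (dX : Module.End R X) (dY : Module.End R Y)
    (f : X →ₗ[R] Y) : Prop :=
  ∀ x, (dX ^ s) x ≡ 0 [SMOD (I • ⊤ : Submodule R X)] →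
    (∃ w, f x ≡ (dY ^ t) w [SMOD (I • ⊤ : Submodule R Y)]) →
      ∃ w, x ≡ (dX ^ t) w [SMOD (I • ⊤ : Submodule R X)]

/-- Modulo `I`, the map `f` is surjective on `ker (d ^ s) / im (d ^ t)`. -/
def IsHomologySurjectiveMod (I : Ideal R) (s t : ℕ) (dX : Module.End R X) (dY : Module.End R Y)
    (f : X →ₗ[R] Y) : Prop :=
  ∀ y, (dY ^ s) y ≡ 0 [SMOD (I • ⊤ : Submodule R Y)] →
    ∃ x, (dX ^ s) x ≡ 0 [SMOD (I • ⊤ : Submodule R X)] ∧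
      ∃ w, y ≡ f x + (dY ^ t) w [SMOD (I • ⊤ : Submodule R Y)]

/- Write a cycle `x` of the kernel as `d ^ q w` modulo `I`. Then `f w` is a cycle for `d ^ q` modulo
`I`, and lifting its class along `f` corrects `w` to an element of the kernel modulo `I`. -/
theorem isAcyclicMod_kerEnd {f : X →ₗ[R] Y} {s : Y →ₗ[R] X} (hX : dX ^ (q + 1) = 0)
    (hf : f ∘ₗ dX = dY ∘ₗ f) (hs : f ∘ₗ s = LinearMap.id)
    (hinj : IsHomologyInjectiveMod I 1 q dX dY f)
    (hsurj : IsHomologySurjectiveMod I q 1 dX dY f) : IsAcyclicMod I q (kerEnd hf) := by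
  intro x hx
  have hfx : f x = 0 := x.2
  have hdx : dX x ≡ 0 [SMOD (I • ⊤ : Submodule R X)] :=
    smodEq_zero_smul_top_map (LinearMap.ker f).subtype hx
  obtain ⟨w, hw⟩ := hinj x (by rwa [pow_one]) ⟨0, by rw [hfx, map_zero]⟩
  have hdfw : (dY ^ q) (f w) ≡ 0 [SMOD (I • ⊤ : Submodule R Y)] := by
    simpa only [map_differential_pow hf, hfx] using (smodEq_smul_top_map f hw).symm
  obtain ⟨x', hx', w', hw'⟩ := hsurj (f w) hdfw
  have hfs (y : Y) : f (s y) = y := LinearMap.congr_fun hs y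
  let e := w - x' - dX (s w')
  have hfe : f e ≡ 0 [SMOD (I • ⊤ : Submodule R Y)] := by
    have hfd : f (dX (s w')) = dY w' := by
      rw [← LinearMap.comp_apply f, hf, LinearMap.comp_apply, hfs]
    rw [pow_one] at hw'
    rw [map_sub, map_sub, hfd, sub_sub]
    exact sub_smodEq_zero.2 hw'
  have hde : (dX ^ q) e ≡ x [SMOD (I • ⊤ : Submodule R X)] := by
    have hd : (dX ^ q) (dX (s w')) = 0 := by
      rw [← Module.End.mul_apply, ← pow_succ, hX, LinearMap.zero_apply]
    simpa only [e, map_sub, hd, sub_zero] using hw.symm.sub hx'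
  refine ⟨kerRetraction hs e, smodEq_smul_top_kernel hs ?_⟩
  have hret : e - s (f e) ≡ e [SMOD (I • ⊤ : Submodule R X)] := by
    simpa only [sub_zero] using (SModEq.refl e).sub (smodEq_zero_smul_top_map s hfe)
  rw [coe_kerEnd_pow_apply]
  exact ((smodEq_smul_top_map (dX ^ q) hret).trans hde).symm

theorem nullHomotopicMap_smodEq_of_smodEq_zero (h : X →ₗ[R] Y) {x : X}
    (hx : dX x ≡ 0 [SMOD (I • ⊤ : Submodule R X)]) :
    nullHomotopicMap q dX dY h x ≡ (dY ^ q) (h x) [SMOD (I • ⊤ : Submodule R Y)] := by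
  rw [nullHomotopicMap_apply, Finset.sum_range_succ']
  have hsum : ∑ i ∈ Finset.range q, (dY ^ (q - (i + 1))) (h ((dX ^ (i + 1)) x)) ≡
      ∑ _ ∈ Finset.range q, 0 [SMOD (I • ⊤ : Submodule R Y)] := by
    refine SModEq.sum fun _ _ => ?_
    rw [pow_succ, Module.End.mul_apply]
    exact smodEq_zero_smul_top_map ((dY ^ _) ∘ₗ h ∘ₗ dX ^ _) hx
  simpa using hsum.add SModEq.rfl

theorem isHomologyInjectiveMod_coprod {f : X →ₗ[R] Z} {g : Y →ₗ[R] Z} (hg : g ∘ₗ dY = dZ ∘ₗ g)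
    (hcontr : IsContractible q dY) (hinj : IsHomologyInjectiveMod I 1 q dX dZ f) :
    IsHomologyInjectiveMod I 1 q (dX.prodMap dY) dZ (f.coprod g) := by
  obtain ⟨c, hc⟩ := hcontr
  rintro ⟨x, v⟩ hxv ⟨w, hw⟩
  rw [pow_one] at hxv
  have hv : v ≡ (dY ^ q) (c v) [SMOD (I • ⊤ : Submodule R Y)] := by
    have := nullHomotopicMap_smodEq_of_smodEq_zero (q := q) (dY := dY) c
      (smodEq_zero_smul_top_map (LinearMap.snd R X Y) hxv)
    rwa [hc] at this
  have hfx : f x ≡ (dZ ^ q) (w - g (c v)) [SMOD (I • ⊤ : Submodule R Z)] := by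
    have := hw.sub (smodEq_smul_top_map g hv)
    rwa [LinearMap.coprod_apply, add_sub_cancel_right, map_differential_pow hg, ← map_sub] at this
  obtain ⟨w', hw'⟩ := hinj x (by simpa using smodEq_zero_smul_top_map (LinearMap.fst R X Y) hxv)
    ⟨_, hfx⟩
  refine ⟨(w', c v), ?_⟩
  have := (smodEq_smul_top_map (LinearMap.inl R X Y) hw').add
    (smodEq_smul_top_map (LinearMap.inr R X Y) hv)
  simpa [prodMap_pow] using this

theorem isHomologySurjectiveMod_coprod {s t : ℕ} {f : X →ₗ[R] Z} (g : Y →ₗ[R] Z)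
    (hsurj : IsHomologySurjectiveMod I s t dX dZ f) :
    IsHomologySurjectiveMod I s t (dX.prodMap dY) dZ (f.coprod g) := by
  intro z hz
  obtain ⟨x, hx, w, hw⟩ := hsurj z hz
  refine ⟨(x, 0), ?_, w, by simpa using hw⟩
  simpa [prodMap_pow] using smodEq_zero_smul_top_map (LinearMap.inl R X Y) hx

end ModIdeal

theorem exists_comp_comp_eq_self {R Q : Type*} [Ring R] [AddCommGroup Q] [Module R Q]
    [IsSemisimpleModule R Q] (t : Module.End R Q) :
    ∃ u : Module.End R Q, t ∘ₗ u ∘ₗ t = t := by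
  obtain ⟨σ, hσ⟩ := IsSemisimpleModule.lifting_property t.rangeRestrict
    t.surjective_rangeRestrict LinearMap.id
  obtain ⟨u, hu⟩ := IsSemisimpleModule.extension_property _
    (LinearMap.range t).subtype_injective σ
  refine ⟨u, LinearMap.ext fun x => ?_⟩
  have hux : u (t x) = σ (t.rangeRestrict x) := LinearMap.congr_fun hu (t.rangeRestrict x)
  rw [LinearMap.comp_apply, LinearMap.comp_apply, hux]
  exact congrArg Subtype.val (LinearMap.congr_fun hσ (t.rangeRestrict x))

theorem bijective_one_sub_of_forall_exists_pow_apply_eq_zero {R X : Type*} [Ring R]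
    [AddCommGroup X] [Module R X] {ν : Module.End R X} (hν : ∀ x, ∃ j, (ν ^ j) x = 0) :
    Function.Bijective (1 - ν : Module.End R X) := by
  constructor
  · refine (injective_iff_map_eq_zero _).2 fun x hx => ?_
    have hfix : ν x = x := (sub_eq_zero.1 hx).symm
    obtain ⟨j, hj⟩ := hν x
    rwa [Module.End.pow_apply, Function.iterate_fixed hfix] at hj
  · intro x
    obtain ⟨j, hj⟩ := hν x
    refine ⟨(∑ i ∈ Finset.range j, ν ^ i) x, ?_⟩
    rw [← Module.End.mul_apply, mul_neg_geom_sum, LinearMap.sub_apply, hj, sub_zero,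
      Module.End.one_apply]

section Reduction

variable {R X : Type*} [CommRing R] [AddCommGroup X] [Module R X] {I : Ideal R} {q : ℕ}
  {d : Module.End R X}

theorem isSemisimpleModule_quotient_smul_top (I : Ideal R) [I.IsMaximal] (X : Type*)
    [AddCommGroup X] [Module R X] : IsSemisimpleModule R (X ⧸ (I • ⊤ : Submodule R X)) :=
  let _ := Ideal.Quotient.field I
  (Module.isTorsionBySet_quotient_ideal_smul X I).isSemisimpleModule_iff.1 inferInstance

theorem exists_section_mod [I.IsMaximal] [Module.Projective R X] (t : Module.End R X) :
    ∃ h : Module.End R X, ∀ x y, x ≡ t y [SMOD (I • ⊤ : Submodule R X)] →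
      x ≡ t (h x) [SMOD (I • ⊤ : Submodule R X)] := by
  have := isSemisimpleModule_quotient_smul_top I X
  let π := (I • ⊤ : Submodule R X).mkQ
  let tQ := (I • ⊤ : Submodule R X).mapQ _ t (Submodule.smul_top_le_comap_smul_top I t)
  obtain ⟨u, hu⟩ := exists_comp_comp_eq_self tQ
  obtain ⟨h, hh⟩ := Module.projective_lifting_property π (u ∘ₗ π) (Submodule.mkQ_surjective _)
  refine ⟨h, fun x y hxy => ?_⟩
  have hx : π x = tQ (π y) := hxy
  have hhx : π (h x) = u (π x) := LinearMap.congr_fun hh x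
  have hty : tQ (u (tQ (π y))) = tQ (π y) := LinearMap.congr_fun hu _
  exact show π x = tQ (π (h x)) by rw [hhx, hx, hty]

theorem one_sub_nullHomotopicMap_pow_smodEq_zero {h : Module.End R X} (hd : d ^ (q + 1) = 0)
    (hsec : ∀ x, d x ≡ 0 [SMOD (I • ⊤ : Submodule R X)] →
      x ≡ (d ^ q) (h x) [SMOD (I • ⊤ : Submodule R X)]) (x : X) :
    ((1 - nullHomotopicMap q d d h) ^ (q + 1)) x ≡ 0 [SMOD (I • ⊤ : Submodule R X)] := by
  set ν := 1 - nullHomotopicMap q d d h with hν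
  have hνd : ν ∘ₗ d = d ∘ₗ ν := by
    rw [hν, LinearMap.sub_comp, LinearMap.comp_sub, nullHomotopicMap_comp_differential hd hd]
    rfl
  have hcycle (x : X) (hx : d x ≡ 0 [SMOD (I • ⊤ : Submodule R X)]) :
      ν x ≡ 0 [SMOD (I • ⊤ : Submodule R X)] :=
    sub_smodEq_zero.2 ((hsec x hx).trans (nullHomotopicMap_smodEq_of_smodEq_zero h hx).symm)
  have hpow (s : ℕ) : ∀ x, (d ^ s) x ≡ 0 [SMOD (I • ⊤ : Submodule R X)] →
      (ν ^ s) x ≡ 0 [SMOD (I • ⊤ : Submodule R X)] := by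
    induction s with
    | zero => exact fun _ => id
    | succ s ih =>
      intro x hx
      rw [pow_succ, Module.End.mul_apply]
      refine ih _ ?_
      rw [← map_differential_pow hνd]
      refine hcycle _ ?_
      rwa [← Module.End.mul_apply, ← pow_succ']
  exact hpow (q + 1) x (by rw [hd, LinearMap.zero_apply])

end Reduction

/-! ### Gradings of modules over polynomial rings -/

open Filter in
/-- A grading of a module over the polynomial ring `k[x_i]` with `deg x_i = -1`. It is encoded by
the projections onto the homogeneous components rather than by the components themselves, so that
gradings of products and kernels are given by formulas. -/
structure PolyGrading (σ k X : Type*) [CommRing k] [AddCommGroup X] [Module (MvPolynomial σ k) X]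
    where
  proj : ℤ → X →+ X
  proj_self : ∀ m x, proj m (proj m x) = proj m x
  proj_ne : ∀ {i j}, i ≠ j → ∀ x, proj i (proj j x) = 0
  eventually_sum_proj : ∀ x, ∀ᶠ s : Finset ℤ in atTop, ∑ m ∈ s, proj m x = x
  proj_C_smul : ∀ c m x,
    proj m ((MvPolynomial.C c : MvPolynomial σ k) • x) =
      (MvPolynomial.C c : MvPolynomial σ k) • proj m x
  proj_X_smul : ∀ i m x,
    proj m ((MvPolynomial.X i : MvPolynomial σ k) • x) =
      (MvPolynomial.X i : MvPolynomial σ k) • proj (m + 1) x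

namespace PolyGrading

open Filter

variable {σ k X Y Z : Type*} [CommRing k] [AddCommGroup X] [Module (MvPolynomial σ k) X]
  [AddCommGroup Y] [Module (MvPolynomial σ k) Y] [AddCommGroup Z] [Module (MvPolynomial σ k) Z]

section Basic

variable (G : PolyGrading σ k X) (H : PolyGrading σ k Y)

/-- The homogeneous components vanish in all large degrees. -/
def IsBoundedAbove : Prop := ∀ᶠ m in atTop, ∀ x, G.proj m x = 0

theorem exists_sum_proj (x : X) : ∃ s : Finset ℤ, ∑ m ∈ s, G.proj m x = x :=
  (G.eventually_sum_proj x).exists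

variable {G} in
theorem addHom_ext {A : Type*} [AddCommMonoid A] {f g : X →+ A}
    (h : ∀ m x, f (G.proj m x) = g (G.proj m x)) : f = g := by
  ext x
  obtain ⟨s, hs⟩ := G.exists_sum_proj x
  rw [← hs, map_sum, map_sum]
  exact Finset.sum_congr rfl fun m _ => h m x

variable {G} in
theorem linearMap_ext {f g : X →ₗ[MvPolynomial σ k] Y}
    (h : ∀ m x, f (G.proj m x) = g (G.proj m x)) : f = g :=
  LinearMap.toAddMonoidHom_injective (addHom_ext h)

variable {G} in
theorem map_smul_of_forall_proj {a : MvPolynomial σ k} {f : X →+ Y}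
    (h : ∀ m x, f (a • G.proj m x) = a • f (G.proj m x)) (x : X) : f (a • x) = a • f x := by
  obtain ⟨s, hs⟩ := G.exists_sum_proj x
  rw [← hs, Finset.smul_sum, map_sum, map_sum, Finset.smul_sum]
  exact Finset.sum_congr rfl fun m _ => h m x

theorem finite_support_proj (x : X) : (Function.support fun m => G.proj m x).Finite := by
  obtain ⟨s, hs⟩ := G.exists_sum_proj x
  refine s.finite_toSet.subset fun m hm => ?_
  contrapose! hm
  rw [Function.notMem_support, ← hs, map_sum]
  exact Finset.sum_eq_zero fun j hj => G.proj_ne (by rintro rfl; exact hm hj) x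

/-- `f` is homogeneous of degree `e`. -/
def IsHomog (e : ℤ) (f : X →ₗ[MvPolynomial σ k] Y) : Prop :=
  ∀ m x, f (G.proj m x) = H.proj (m + e) (f x)

variable {G H} in
theorem isHomog_of_proj_apply_proj {e : ℤ} {f : X →ₗ[MvPolynomial σ k] Y}
    (h : ∀ m x, H.proj (m + e) (f (G.proj m x)) = f (G.proj m x)) : IsHomog G H e f := by
  intro m
  refine DFunLike.congr_fun (f := f.toAddMonoidHom.comp (G.proj m))
    (g := (H.proj (m + e)).comp f.toAddMonoidHom) (addHom_ext (G := G) fun j x => ?_)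
  change f (G.proj m (G.proj j x)) = H.proj (m + e) (f (G.proj j x))
  obtain rfl | hmj := eq_or_ne m j
  · rw [G.proj_self, h]
  · rw [G.proj_ne hmj, map_zero, ← h, H.proj_ne (by simpa using hmj)]

theorem IsHomog.id : IsHomog G G 0 LinearMap.id := fun m x => by
  rw [add_zero, LinearMap.id_apply, LinearMap.id_apply]

end Basic

section IsHomog

variable {G : PolyGrading σ k X} {H : PolyGrading σ k Y} {K : PolyGrading σ k Z} {a b e : ℤ}

theorem IsHomog.comp {f : X →ₗ[MvPolynomial σ k] Y} {g : Y →ₗ[MvPolynomial σ k] Z}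
    (hg : IsHomog H K b g) (hf : IsHomog G H a f) (he : a + b = e) : IsHomog G K e (g ∘ₗ f) :=
  fun m x => by rw [LinearMap.comp_apply, hf, hg, LinearMap.comp_apply, ← he, add_assoc]

theorem IsHomog.sub {f g : X →ₗ[MvPolynomial σ k] Y} (hf : IsHomog G H e f)
    (hg : IsHomog G H e g) : IsHomog G H e (f - g) := fun m x => by
  rw [LinearMap.sub_apply, LinearMap.sub_apply, hf, hg, map_sub]

theorem IsHomog.sum {ι : Type*} {s : Finset ι} {f : ι → X →ₗ[MvPolynomial σ k] Y}
    (hf : ∀ i ∈ s, IsHomog G H e (f i)) : IsHomog G H e (∑ i ∈ s, f i) := fun m x => by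
  rw [LinearMap.sum_apply, LinearMap.sum_apply, map_sum]
  exact Finset.sum_congr rfl fun i hi => hf i hi m x

theorem IsHomog.pow {f : Module.End (MvPolynomial σ k) X} (hf : IsHomog G G e f) (j : ℕ) :
    IsHomog G G (j * e) (f ^ j) := by
  induction j with
  | zero =>
    rw [Nat.cast_zero, zero_mul]
    exact IsHomog.id G
  | succ j ih => exact IsHomog.comp ih hf (by push_cast; ring)

theorem IsHomog.nullHomotopicMap {q : ℕ} {dX : Module.End (MvPolynomial σ k) X}
    {dY : Module.End (MvPolynomial σ k) Y} (hX : IsHomog G G (-1) dX) (hY : IsHomog H H (-1) dY)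
    {h : X →ₗ[MvPolynomial σ k] Y} (hh : IsHomog G H q h) :
    IsHomog G H 0 (nullHomotopicMap q dX dY h) :=
  IsHomog.sum fun i hi => (hY.pow (q - i)).comp (hh.comp (hX.pow i) rfl) (by
    rw [Nat.cast_sub (Nat.le_of_lt_succ (Finset.mem_range.1 hi))]
    ring)

end IsHomog

section Component

variable (G : PolyGrading σ k X) (H : PolyGrading σ k Y)

/-- The additive map underlying the degree `e` component of a linear map. -/
noncomputable def componentAddHom (e : ℤ) (f : X →ₗ[MvPolynomial σ k] Y) : X →+ Y where
  toFun x := ∑ᶠ m, H.proj (m + e) (f (G.proj m x))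
  map_zero' := by simp
  map_add' x y := by
    have hfin (z : X) : (Function.support fun m => H.proj (m + e) (f (G.proj m z))).Finite :=
      (G.finite_support_proj z).subset fun m hm hzero => hm (by simp [hzero])
    simp only [map_add, finsum_add_distrib (hfin x) (hfin y)]

theorem componentAddHom_proj (e : ℤ) (f : X →ₗ[MvPolynomial σ k] Y) (m : ℤ) (x : X) :
    G.componentAddHom H e f (G.proj m x) = H.proj (m + e) (f (G.proj m x)) := by
  refine (finsum_eq_single _ m fun j hj => ?_).trans (by rw [G.proj_self])
  rw [G.proj_ne hj, map_zero, map_zero]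

theorem componentAddHom_smul (e : ℤ) (f : X →ₗ[MvPolynomial σ k] Y) (a : MvPolynomial σ k)
    (x : X) : G.componentAddHom H e f (a • x) = a • G.componentAddHom H e f x := by
  induction a using MvPolynomial.induction_on generalizing x with
  | add a b ha hb => rw [add_smul, add_smul, map_add, ha, hb]
  | C c =>
    refine map_smul_of_forall_proj (G := G) (fun m y => ?_) x
    rw [← G.proj_C_smul, componentAddHom_proj, componentAddHom_proj, G.proj_C_smul, map_smul,
      H.proj_C_smul]
  | mul_X a i ha =>
    rw [mul_smul, ha, mul_smul]
    congr 1
    refine map_smul_of_forall_proj (G := G) (fun m y => ?_) x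
    obtain ⟨m, rfl⟩ : ∃ j, m = j + 1 := ⟨m - 1, by ring⟩
    rw [← G.proj_X_smul, componentAddHom_proj, componentAddHom_proj, G.proj_X_smul, map_smul,
      H.proj_X_smul, add_right_comm]

/-- The degree `e` component of a linear map `f`: on a homogeneous element of degree `m` it is the
degree `m + e` component of `f`. -/
noncomputable def component (e : ℤ) (f : X →ₗ[MvPolynomial σ k] Y) :
    X →ₗ[MvPolynomial σ k] Y where
  __ := G.componentAddHom H e f
  map_smul' := G.componentAddHom_smul H e f

theorem component_proj (e : ℤ) (f : X →ₗ[MvPolynomial σ k] Y) (m : ℤ) (x : X) :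
    G.component H e f (G.proj m x) = H.proj (m + e) (f (G.proj m x)) :=
  G.componentAddHom_proj H e f m x

theorem isHomog_component (e : ℤ) (f : X →ₗ[MvPolynomial σ k] Y) :
    IsHomog G H e (G.component H e f) :=
  isHomog_of_proj_apply_proj fun m x => by rw [component_proj, H.proj_self]

theorem component_sub (e : ℤ) (f g : X →ₗ[MvPolynomial σ k] Y) :
    G.component H e (f - g) = G.component H e f - G.component H e g :=
  linearMap_ext (G := G) fun m x => by simp only [component_proj, LinearMap.sub_apply, map_sub]

theorem component_sum {ι : Type*} (e : ℤ) (s : Finset ι) (f : ι → X →ₗ[MvPolynomial σ k] Y) :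
    G.component H e (∑ i ∈ s, f i) = ∑ i ∈ s, G.component H e (f i) :=
  linearMap_ext (G := G) fun m x => by simp only [component_proj, LinearMap.sum_apply, map_sum]

theorem component_of_isHomog {G : PolyGrading σ k X} {H : PolyGrading σ k Y} {e : ℤ}
    {f : X →ₗ[MvPolynomial σ k] Y} (hf : IsHomog G H e f) : G.component H e f = f :=
  linearMap_ext (G := G) fun m x => by rw [component_proj, ← hf, G.proj_self]

variable {G H} {K : PolyGrading σ k Z} {a b e : ℤ}

theorem component_comp_of_isHomog_left {f : X →ₗ[MvPolynomial σ k] Y}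
    {g : Y →ₗ[MvPolynomial σ k] Z} (hg : IsHomog H K b g) (he : a + b = e) :
    G.component K e (g ∘ₗ f) = g ∘ₗ G.component H a f :=
  linearMap_ext (G := G) fun m x => by
    rw [component_proj, LinearMap.comp_apply, LinearMap.comp_apply, component_proj, hg, ← he,
      add_assoc]

theorem component_comp_of_isHomog_right {f : X →ₗ[MvPolynomial σ k] Y}
    {g : Y →ₗ[MvPolynomial σ k] Z} (hf : IsHomog G H a f) (he : a + b = e) :
    G.component K e (g ∘ₗ f) = H.component K b g ∘ₗ f :=
  linearMap_ext (G := G) fun m x => by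
    rw [component_proj, LinearMap.comp_apply, LinearMap.comp_apply, hf, component_proj, ← he,
      add_assoc]

theorem component_nullHomotopicMap {q : ℕ} {dX : Module.End (MvPolynomial σ k) X}
    {dY : Module.End (MvPolynomial σ k) Y} (hX : IsHomog G G (-1) dX) (hY : IsHomog H H (-1) dY)
    (h : X →ₗ[MvPolynomial σ k] Y) :
    G.component H 0 (nullHomotopicMap q dX dY h) =
      nullHomotopicMap q dX dY (G.component H q h) := by
  rw [nullHomotopicMap, component_sum]
  refine Finset.sum_congr rfl fun i hi => ?_
  have hdeg : (q : ℤ) + (q - i : ℕ) * (-1) = i := by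
    rw [Nat.cast_sub (Nat.le_of_lt_succ (Finset.mem_range.1 hi))]
    ring
  rw [← LinearMap.comp_assoc, component_comp_of_isHomog_right (hX.pow i) (b := i) (by ring),
    component_comp_of_isHomog_left (hY.pow (q - i)) hdeg, LinearMap.comp_assoc]

theorem component_mem {U : Submodule (MvPolynomial σ k) X} {V : Submodule (MvPolynomial σ k) Y}
    (hU : ∀ m, ∀ x ∈ U, G.proj m x ∈ U) (hV : ∀ m, ∀ y ∈ V, H.proj m y ∈ V)
    {f : X →ₗ[MvPolynomial σ k] Y} (hf : ∀ x ∈ U, f x ∈ V) {x : X} (hx : x ∈ U) :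
    G.component H e f x ∈ V := by
  obtain ⟨s, hs⟩ := G.exists_sum_proj x
  rw [← hs, map_sum]
  refine sum_mem fun m _ => ?_
  rw [component_proj]
  exact hV _ _ (hf _ (hU m x hx))

end Component

end PolyGrading

namespace PolyGrading

open Filter

variable {σ k X Y Z : Type*} [CommRing k] [AddCommGroup X] [Module (MvPolynomial σ k) X]
  [AddCommGroup Y] [Module (MvPolynomial σ k) Y] [AddCommGroup Z] [Module (MvPolynomial σ k) Z]

section Constructions

variable (G : PolyGrading σ k X) (H : PolyGrading σ k Y)

/-- The grading of a direct sum of two graded modules. -/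
def prod : PolyGrading σ k (X × Y) where
  proj m := (G.proj m).prodMap (H.proj m)
  proj_self m x := Prod.ext (G.proj_self m _) (H.proj_self m _)
  proj_ne hij x := Prod.ext (G.proj_ne hij _) (H.proj_ne hij _)
  eventually_sum_proj x := by
    filter_upwards [G.eventually_sum_proj x.1, H.eventually_sum_proj x.2] with s hs ht
    exact Prod.ext (Prod.fst_sum.trans hs) (Prod.snd_sum.trans ht)
  proj_C_smul c m x := Prod.ext (G.proj_C_smul c m _) (H.proj_C_smul c m _)
  proj_X_smul i m x := Prod.ext (G.proj_X_smul i m _) (H.proj_X_smul i m _)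

/-- The grading of `G` shifted by `c`: its component of degree `m` is the one of degree `m + c`. -/
def shift (c : ℤ) : PolyGrading σ k X where
  proj m := G.proj (m + c)
  proj_self m := G.proj_self (m + c)
  proj_ne hij := G.proj_ne (by simpa using hij)
  eventually_sum_proj x := by
    have htendsto : Tendsto (Finset.image (· + c)) atTop atTop :=
      tendsto_finset_image_atTop_atTop (i := (· - c)) fun m => sub_add_cancel m c
    filter_upwards [htendsto.eventually (G.eventually_sum_proj x)] with s hs
    rwa [Finset.sum_image (add_left_injective c).injOn] at hs
  proj_C_smul a m := G.proj_C_smul a (m + c)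
  proj_X_smul i m x := by rw [G.proj_X_smul, add_right_comm]

/-- The grading of a finite direct sum of graded modules. -/
def pi {ι : Type*} [Finite ι] {X : ι → Type*} [∀ i, AddCommGroup (X i)]
    [∀ i, Module (MvPolynomial σ k) (X i)] (G : ∀ i, PolyGrading σ k (X i)) :
    PolyGrading σ k (∀ i, X i) where
  proj m := AddMonoidHom.pi fun i => ((G i).proj m).comp (Pi.evalAddMonoidHom X i)
  proj_self m v := funext fun i => (G i).proj_self m (v i)
  proj_ne hmn v := funext fun i => (G i).proj_ne hmn (v i)
  eventually_sum_proj v := by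
    filter_upwards [eventually_all.2 fun i => (G i).eventually_sum_proj (v i)] with s hs
    exact funext fun i => (Finset.sum_apply i s _).trans (hs i)
  proj_C_smul c m v := funext fun i => (G i).proj_C_smul c m (v i)
  proj_X_smul j m v := funext fun i => (G i).proj_X_smul j m (v i)

/-- The grading induced on a submodule that contains the components of its elements. -/
noncomputable def restrict (U : Submodule (MvPolynomial σ k) X)
    (hU : ∀ m, ∀ x ∈ U, G.proj m x ∈ U) : PolyGrading σ k U where
  proj m := ((G.proj m).comp U.subtype.toAddMonoidHom).codRestrict U fun x => hU m x x.2
  proj_self m x := Subtype.ext (G.proj_self m x)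
  proj_ne hij x := Subtype.ext (G.proj_ne hij x)
  eventually_sum_proj x := by
    filter_upwards [G.eventually_sum_proj x] with s hs
    exact Subtype.ext ((AddSubmonoidClass.coe_finsetSum _ s).trans hs)
  proj_C_smul c m x := Subtype.ext (G.proj_C_smul c m x)
  proj_X_smul i m x := Subtype.ext (G.proj_X_smul i m x)

end Constructions

section IsBoundedAbove

variable {G : PolyGrading σ k X} {H : PolyGrading σ k Y}

theorem IsBoundedAbove.prod (hG : G.IsBoundedAbove) (hH : H.IsBoundedAbove) :
    (G.prod H).IsBoundedAbove := by
  filter_upwards [hG, hH] with m hm hm' x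
  exact Prod.ext (hm x.1) (hm' x.2)

theorem IsBoundedAbove.shift (hG : G.IsBoundedAbove) (c : ℤ) : (G.shift c).IsBoundedAbove :=
  (tendsto_atTop_add_const_right atTop c tendsto_id).eventually hG

theorem IsBoundedAbove.pi {ι : Type*} [Finite ι] {X : ι → Type*} [∀ i, AddCommGroup (X i)]
    [∀ i, Module (MvPolynomial σ k) (X i)] {G : ∀ i, PolyGrading σ k (X i)}
    (hG : ∀ i, (G i).IsBoundedAbove) : (PolyGrading.pi G).IsBoundedAbove := by
  filter_upwards [eventually_all.2 hG] with m hm v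
  exact funext fun i => hm i (v i)

theorem IsBoundedAbove.restrict (hG : G.IsBoundedAbove) {U : Submodule (MvPolynomial σ k) X}
    (hU : ∀ m, ∀ x ∈ U, G.proj m x ∈ U) : (G.restrict U hU).IsBoundedAbove := by
  filter_upwards [hG] with m hm x
  exact Subtype.ext (hm x)

end IsBoundedAbove

section Homogeneity

variable {G : PolyGrading σ k X} {H : PolyGrading σ k Y} {K : PolyGrading σ k Z} {e : ℤ}

theorem IsHomog.prodMap {f : Module.End (MvPolynomial σ k) X} {g : Module.End (MvPolynomial σ k) Y}
    (hf : IsHomog G G e f) (hg : IsHomog H H e g) :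
    IsHomog (G.prod H) (G.prod H) e (f.prodMap g) :=
  fun m x => Prod.ext (hf m x.1) (hg m x.2)

theorem IsHomog.coprod {f : X →ₗ[MvPolynomial σ k] Z} {g : Y →ₗ[MvPolynomial σ k] Z}
    (hf : IsHomog G K e f) (hg : IsHomog H K e g) : IsHomog (G.prod H) K e (f.coprod g) :=
  fun m x => by
    rw [LinearMap.coprod_apply, LinearMap.coprod_apply, map_add, ← hf, ← hg]
    rfl

theorem IsHomog.proj_mem_ker {f : X →ₗ[MvPolynomial σ k] Y} (hf : IsHomog G H e f) (m : ℤ) (x : X)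
    (hx : x ∈ LinearMap.ker f) : G.proj m x ∈ LinearMap.ker f := by
  rw [LinearMap.mem_ker, hf, LinearMap.mem_ker.1 hx, map_zero]

theorem IsHomog.kerEnd {dX : Module.End (MvPolynomial σ k) X} {dY : Module.End (MvPolynomial σ k) Y}
    {f : X →ₗ[MvPolynomial σ k] Y} {a : ℤ} (hX : IsHomog G G a dX) (hdeg : IsHomog G H e f)
    (hf : f ∘ₗ dX = dY ∘ₗ f) :
    IsHomog (G.restrict _ hdeg.proj_mem_ker) (G.restrict _ hdeg.proj_mem_ker) a (kerEnd hf) :=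
  fun m x => Subtype.ext (hX m x)

theorem isHomog_shiftEnd (G : PolyGrading σ k X) (q : ℕ) :
    IsHomog (pi fun i : Fin (q + 1) => G.shift i) (pi fun i : Fin (q + 1) => G.shift i) (-1)
      (shiftEnd (MvPolynomial σ k) X q) := by
  refine fun m v => funext fun i => ?_
  cases i using Fin.cases with
  | zero => exact (map_zero (G.proj _)).symm
  | succ j =>
    change G.proj (m + (j.castSucc : ℕ)) (v j.castSucc) =
      G.proj (m + -1 + (j.succ : ℕ)) (v j.castSucc)
    rw [Fin.val_succ, Fin.val_castSucc, Nat.cast_succ, add_assoc m, neg_add_cancel_comm_assoc]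

theorem IsHomog.actionMap {d : Module.End (MvPolynomial σ k) X} (hd : IsHomog G G (-1) d) (q : ℕ) :
    IsHomog (pi fun i : Fin (q + 1) => G.shift i) G 0 (actionMap q d) := by
  intro m v
  rw [actionMap_apply, actionMap_apply, map_sum]
  refine Finset.sum_congr rfl fun i _ => ?_
  change (d ^ (i : ℕ)) (G.proj (m + (i : ℕ)) (v i)) = _
  rw [hd.pow i, mul_neg_one, add_neg_cancel_right, add_zero]

end Homogeneity

end PolyGrading

/-! ### Contractibility from acyclicity modulo the variables -/

section Nakayama

open Filter
open MvPolynomial (idealOfVars)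

variable {σ k X : Type*}

theorem isMaximal_idealOfVars [Field k] : (idealOfVars σ k).IsMaximal := by
  have hker : idealOfVars σ k = RingHom.ker (MvPolynomial.constantCoeff (σ := σ) (R := k)) := by
    ext a
    rw [← pow_one (idealOfVars σ k), MvPolynomial.mem_pow_idealOfVars_iff', RingHom.mem_ker]
    simp [Finsupp.degree_eq_zero_iff, MvPolynomial.constantCoeff_eq]
  rw [hker]
  exact RingHom.ker_isMaximal_of_surjective _ fun c => ⟨_, MvPolynomial.constantCoeff_C σ c⟩

variable [CommRing k] [AddCommGroup X] [Module (MvPolynomial σ k) X]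

@[elab_as_elim]
theorem idealOfVars_smul_top_induction {motive : X → Prop} (zero : motive 0)
    (add : ∀ x y, motive x → motive y → motive (x + y))
    (X_smul : ∀ i x, motive ((MvPolynomial.X i : MvPolynomial σ k) • x)) {x : X}
    (hx : x ∈ (idealOfVars σ k • ⊤ : Submodule (MvPolynomial σ k) X)) : motive x := by
  refine Submodule.smul_induction_on hx (fun a ha y _ => ?_) add
  induction ha using Submodule.span_induction generalizing y with
  | mem a ha =>
    obtain ⟨i, rfl⟩ := ha
    exact X_smul i y
  | zero => rwa [zero_smul]
  | add a b _ _ ha hb =>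
    rw [add_smul]
    exact add _ _ (ha y trivial) (hb y trivial)
  | smul c a _ ha =>
    rw [smul_eq_mul, mul_comm, mul_smul]
    exact ha (c • y) trivial

namespace PolyGrading

variable (G : PolyGrading σ k X)

theorem proj_mem_idealOfVars_smul_top (m : ℤ) {x : X}
    (hx : x ∈ (idealOfVars σ k • ⊤ : Submodule (MvPolynomial σ k) X)) :
    G.proj m x ∈ (idealOfVars σ k • ⊤ : Submodule (MvPolynomial σ k) X) := by
  refine idealOfVars_smul_top_induction ?_ (fun x y hx hy => ?_) (fun i x => ?_) hx
  · rw [map_zero]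
    exact zero_mem _
  · rw [map_add]
    exact add_mem hx hy
  · rw [G.proj_X_smul]
    exact Submodule.smul_mem_smul (Ideal.subset_span ⟨i, rfl⟩) trivial

variable {G}

/- Each application of `ν ^ r` to a homogeneous element brings in a variable, that is, it is applied
to elements of higher degree. -/
theorem exists_pow_apply_eq_zero_of_pow_mem (hG : G.IsBoundedAbove)
    {ν : Module.End (MvPolynomial σ k) X} (hν : IsHomog G G 0 ν) {r : ℕ}
    (hr : ∀ x, (ν ^ r) x ∈ (idealOfVars σ k • ⊤ : Submodule (MvPolynomial σ k) X)) (x : X) :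
    ∃ j, (ν ^ j) x = 0 := by
  obtain ⟨b, hb⟩ := eventually_atTop.1 hG
  have hzero (j : ℕ) : ∀ m : ℤ, b ≤ m + j → ∀ x, (ν ^ (r * j)) (G.proj m x) = 0 := by
    induction j with
    | zero =>
      intro m hm x
      rw [hb m (by simpa using hm), map_zero]
    | succ j ih =>
      intro m hm x
      rw [mul_add_one, pow_add, Module.End.mul_apply, hν.pow r m x, mul_zero, add_zero]
      refine idealOfVars_smul_top_induction ?_ (fun x y hx hy => ?_) (fun i x => ?_) (hr x)
      · rw [map_zero, map_zero]
      · rw [map_add, map_add, hx, hy, add_zero]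
      · rw [G.proj_X_smul, map_smul, ih (m + 1) (by push_cast at hm; linarith), smul_zero]
  obtain ⟨s, hs⟩ := G.exists_sum_proj x
  obtain ⟨j, hj⟩ := (s.image fun m => (b - m).toNat).exists_le
  refine ⟨r * j, ?_⟩
  rw [← hs, map_sum]
  refine Finset.sum_eq_zero fun m hm => hzero j m ?_ x
  have := hj _ (Finset.mem_image_of_mem _ hm)
  omega

theorem isHomog_one_sub_nullHomotopicMap {q : ℕ} {d h : Module.End (MvPolynomial σ k) X}
    (hd : IsHomog G G (-1) d) (hh : IsHomog G G q h) :
    IsHomog G G 0 (1 - nullHomotopicMap q d d h) :=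
  (IsHomog.id G).sub (hd.nullHomotopicMap hd hh)

end PolyGrading

end Nakayama

namespace PolyGrading

open MvPolynomial (idealOfVars)

variable {σ k X : Type*} [Field k] [AddCommGroup X] [Module (MvPolynomial σ k) X]
  {G : PolyGrading σ k X} {q : ℕ} {d : Module.End (MvPolynomial σ k) X}

theorem exists_isHomog_section_mod [Module.Projective (MvPolynomial σ k) X]
    (hdeg : IsHomog G G (-1) d) (hacyc : IsAcyclicMod (idealOfVars σ k) q d) :
    ∃ h : Module.End (MvPolynomial σ k) X, IsHomog G G q h ∧
      ∀ x, d x ≡ 0 [SMOD (idealOfVars σ k • ⊤ : Submodule (MvPolynomial σ k) X)] →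
        x ≡ (d ^ q) (h x) [SMOD (idealOfVars σ k • ⊤ : Submodule (MvPolynomial σ k) X)] := by
  have := isMaximal_idealOfVars (σ := σ) (k := k)
  obtain ⟨h, hh⟩ := exists_section_mod (I := idealOfVars σ k) (d ^ q)
  refine ⟨G.component G q h, G.isHomog_component G q h, fun x hx => ?_⟩
  let J : Submodule (MvPolynomial σ k) X := idealOfVars σ k • ⊤
  have hJ (m : ℤ) (y : X) (hy : y ∈ J) : G.proj m y ∈ J := G.proj_mem_idealOfVars_smul_top m hy
  have hcycles (m : ℤ) (y : X) (hy : y ∈ J.comap d) : G.proj m y ∈ J.comap d := by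
    rw [Submodule.mem_comap, hdeg m y]
    exact hJ _ _ hy
  have hxd : d x ∈ J := SModEq.zero.1 hx
  have hcomp : G.component G 0 (LinearMap.id - (d ^ q) ∘ₗ h) =
      LinearMap.id - (d ^ q) ∘ₗ G.component G q h := by
    rw [component_sub, component_of_isHomog (IsHomog.id G),
      component_comp_of_isHomog_left (hdeg.pow q) (by ring)]
  have hmem : (LinearMap.id - (d ^ q) ∘ₗ G.component G q h : Module.End _ X) x ∈ J := by
    rw [← hcomp]
    refine component_mem hcycles hJ (fun y hy => ?_) hxd
    obtain ⟨w, hw⟩ := hacyc y (SModEq.zero.2 hy)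
    exact SModEq.sub_mem.1 (hh y w hw)
  exact SModEq.sub_mem.2 hmem

theorem isContractible_of_isAcyclicMod [Module.Projective (MvPolynomial σ k) X]
    (hG : G.IsBoundedAbove) (hdeg : IsHomog G G (-1) d) (hd : d ^ (q + 1) = 0)
    (hacyc : IsAcyclicMod (idealOfVars σ k) q d) : IsContractible q d := by
  obtain ⟨h, hh, hsec⟩ := exists_isHomog_section_mod hdeg hacyc
  have hnil := exists_pow_apply_eq_zero_of_pow_mem hG (isHomog_one_sub_nullHomotopicMap hdeg hh)
    fun x => SModEq.zero.1 (one_sub_nullHomotopicMap_pow_smodEq_zero hd hsec x)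
  refine isContractible_of_bijective_nullHomotopicMap hd (h := h) ?_
  simpa only [sub_sub_cancel] using bijective_one_sub_of_forall_exists_pow_apply_eq_zero hnil

end PolyGrading

/-! ### Homotopy equivalences of graded modules -/

namespace PolyGrading

open MvPolynomial (idealOfVars)

section Homogenization

variable {σ k X Y : Type*} [CommRing k] [AddCommGroup X] [Module (MvPolynomial σ k) X]
  [AddCommGroup Y] [Module (MvPolynomial σ k) Y] {G : PolyGrading σ k X} {H : PolyGrading σ k Y}
  {q : ℕ} {dX : Module.End (MvPolynomial σ k) X} {dY : Module.End (MvPolynomial σ k) Y}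
  {f : X →ₗ[MvPolynomial σ k] Y}

/-- Homotopy equivalences of graded modules with differentials satisfying `d ^ (q + 1) = 0`: the
homotopy inverse has degree `0` and the homotopies have degree `q`. -/
def IsGradedHomotopyEquiv (G : PolyGrading σ k X) (H : PolyGrading σ k Y) (q : ℕ)
    (dX : Module.End (MvPolynomial σ k) X) (dY : Module.End (MvPolynomial σ k) Y)
    (f : X →ₗ[MvPolynomial σ k] Y) : Prop :=
  ∃ g : Y →ₗ[MvPolynomial σ k] X, IsHomog H G 0 g ∧ g ∘ₗ dY = dX ∘ₗ g ∧
    (∃ h, IsHomog G G q h ∧ g ∘ₗ f - LinearMap.id = nullHomotopicMap q dX dX h) ∧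
    ∃ h, IsHomog H H q h ∧ f ∘ₗ g - LinearMap.id = nullHomotopicMap q dY dY h

theorem isGradedHomotopyEquiv_of_isHomotopyEquiv (hX : IsHomog G G (-1) dX)
    (hY : IsHomog H H (-1) dY) (hdeg : IsHomog G H 0 f) (hf : IsHomotopyEquiv q dX dY f) :
    IsGradedHomotopyEquiv G H q dX dY f := by
  obtain ⟨g, hg, ⟨h₁, hh₁⟩, h₂, hh₂⟩ := hf
  refine ⟨H.component G 0 g, H.isHomog_component G 0 g, ?_,
    ⟨G.component G q h₁, G.isHomog_component G q h₁, ?_⟩,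
    H.component H q h₂, H.isHomog_component H q h₂, ?_⟩
  · rw [← component_comp_of_isHomog_right hY (add_zero (-1)), hg,
      component_comp_of_isHomog_left hX (zero_add (-1))]
  · rw [← component_nullHomotopicMap hX hX, ← hh₁, component_sub,
      component_of_isHomog (IsHomog.id G), component_comp_of_isHomog_right hdeg (add_zero 0)]
  · rw [← component_nullHomotopicMap hY hY, ← hh₂, component_sub,
      component_of_isHomog (IsHomog.id H), component_comp_of_isHomog_left hdeg (add_zero 0)]

end Homogenization

variable {σ k X Y : Type*} [Field k] [AddCommGroup X] [Module (MvPolynomial σ k) X]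
  [AddCommGroup Y] [Module (MvPolynomial σ k) Y] {G : PolyGrading σ k X} {H : PolyGrading σ k Y}
  {q : ℕ} {dX : Module.End (MvPolynomial σ k) X} {dY : Module.End (MvPolynomial σ k) Y}
  {f : X →ₗ[MvPolynomial σ k] Y}

theorem isContractible_kerEnd [Module.Projective (MvPolynomial σ k) X]
    {s : Y →ₗ[MvPolynomial σ k] X} (hG : G.IsBoundedAbove) (hXdeg : IsHomog G G (-1) dX)
    (hfdeg : IsHomog G H 0 f) (hX : dX ^ (q + 1) = 0) (hf : f ∘ₗ dX = dY ∘ₗ f)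
    (hs : f ∘ₗ s = LinearMap.id) (hinj : IsHomologyInjectiveMod (idealOfVars σ k) 1 q dX dY f)
    (hsurj : IsHomologySurjectiveMod (idealOfVars σ k) q 1 dX dY f) :
    IsContractible q (kerEnd hf) :=
  have := projective_ker_of_comp_eq_id hs
  isContractible_of_isAcyclicMod (hG.restrict hfdeg.proj_mem_ker) (hXdeg.kerEnd hfdeg hf)
    (kerEnd_pow_eq_zero hf hX) (isAcyclicMod_kerEnd hX hf hs hinj hsurj)

theorem isGradedHomotopyEquiv_of_isHomologyInjectiveMod_of_isHomologySurjectiveMod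
    [Module.Projective (MvPolynomial σ k) X] [Module.Projective (MvPolynomial σ k) Y]
    (hG : G.IsBoundedAbove) (hH : H.IsBoundedAbove) (hXdeg : IsHomog G G (-1) dX)
    (hYdeg : IsHomog H H (-1) dY) (hfdeg : IsHomog G H 0 f) (hX : dX ^ (q + 1) = 0)
    (hY : dY ^ (q + 1) = 0) (hf : f ∘ₗ dX = dY ∘ₗ f)
    (hinj : IsHomologyInjectiveMod (idealOfVars σ k) 1 q dX dY f)
    (hsurj : IsHomologySurjectiveMod (idealOfVars σ k) q 1 dX dY f) :
    IsGradedHomotopyEquiv G H q dX dY f := by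
  have := projective_pi (R := MvPolynomial σ k) fun _ : Fin (q + 1) => Y
  have hcontr := isContractible_shiftEnd (R := MvPolynomial σ k) (N := Y) q
  have haction := actionMap_comp_shiftEnd hY
  have hsection := actionMap_comp_single_zero q dY
  have hker : IsContractible q (kerEnd (coprod_comp_prodMap hf haction)) :=
    isContractible_kerEnd (hG.prod (IsBoundedAbove.pi fun i : Fin (q + 1) => hH.shift i))
      (hXdeg.prodMap (isHomog_shiftEnd H q)) (hfdeg.coprod (hYdeg.actionMap q))
      (prodMap_pow_eq_zero hX (shiftEnd_pow_eq_zero q)) (coprod_comp_prodMap hf haction)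
      (coprod_comp_inr_comp f hsection) (isHomologyInjectiveMod_coprod haction hcontr hinj)
      (isHomologySurjectiveMod_coprod _ hsurj)
  exact isGradedHomotopyEquiv_of_isHomotopyEquiv hXdeg hYdeg hfdeg
    (isHomotopyEquiv_of_isContractible_kerEnd_coprod hX (shiftEnd_pow_eq_zero q) hf haction
      hsection hcontr hker)

end PolyGrading

/-! ### `p`-DG modules -/

section OfDecomposition

open DirectSum

variable {σ k X : Type*} [CommRing k] [AddCommGroup X] [Module k X] (gr : ℤ → Submodule k X)
  [Decomposition gr]

/-- The projection onto the component of degree `m`. -/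
def decomposeProj (m : ℤ) : X →ₗ[k] X :=
  (gr m).subtype ∘ₗ component k ℤ (fun i => gr i) m ∘ₗ (decomposeLinearEquiv gr).toLinearMap

theorem decomposeProj_apply (m : ℤ) (x : X) : decomposeProj gr m x = decompose gr x m := rfl

theorem decomposeProj_mem (m : ℤ) (x : X) : decomposeProj gr m x ∈ gr m := SetLike.coe_mem _

variable {gr}

theorem decomposeProj_of_mem {m : ℤ} {x : X} (hx : x ∈ gr m) : decomposeProj gr m x = x :=
  decompose_of_mem_same gr hx

theorem decomposeProj_of_mem_ne {i j : ℤ} (hij : i ≠ j) {x : X} (hx : x ∈ gr j) :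
    decomposeProj gr i x = 0 :=
  decompose_of_mem_ne gr hx hij.symm

theorem sum_decomposeProj [∀ i, DecidableEq (gr i)] {s : Finset ℤ} {x : X}
    (hs : (decompose gr x).support ⊆ s) : ∑ m ∈ s, decomposeProj gr m x = x := by
  rw [← Finset.sum_subset hs fun m _ hm => ?_]
  · exact sum_support_decompose gr x
  · rw [decomposeProj_apply, DFinsupp.notMem_support_iff.1 hm, ZeroMemClass.coe_zero]

variable [Module (MvPolynomial σ k) X]
  (hX : ∀ i m, ∀ x ∈ gr m, (MvPolynomial.X i : MvPolynomial σ k) • x ∈ gr (m - 1))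

include hX in
theorem decomposeProj_X_smul (i : σ) (m : ℤ) (x : X) :
    decomposeProj gr m ((MvPolynomial.X i : MvPolynomial σ k) • x) =
      (MvPolynomial.X i : MvPolynomial σ k) • decomposeProj gr (m + 1) x := by
  induction x using Decomposition.inductionOn gr with
  | zero => rw [smul_zero, map_zero, map_zero, smul_zero]
  | @homogeneous j x =>
    obtain rfl | hj := eq_or_ne m (j - 1)
    · rw [sub_add_cancel, decomposeProj_of_mem x.2, decomposeProj_of_mem (hX i j x x.2)]
    · rw [decomposeProj_of_mem_ne (by omega) x.2, decomposeProj_of_mem_ne hj (hX i j x x.2),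
        smul_zero]
  | add x y hx hy => rw [smul_add, map_add, map_add, hx, hy, smul_add]

variable [IsScalarTower k (MvPolynomial σ k) X]

open Filter in
/-- The grading of a module decomposed into subspaces whose degree is lowered by the variables. -/
def PolyGrading.ofDecomposition : PolyGrading σ k X where
  proj m := (decomposeProj gr m).toAddMonoidHom
  proj_self m x := decomposeProj_of_mem (decomposeProj_mem gr m x)
  proj_ne hij x := decomposeProj_of_mem_ne hij (decomposeProj_mem gr _ x)
  eventually_sum_proj x := by
    classical
    filter_upwards [eventually_ge_atTop (decompose gr x).support] with s hs
    exact sum_decomposeProj hs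
  proj_C_smul c m x := by
    rw [← MvPolynomial.algebraMap_eq, algebraMap_smul, algebraMap_smul]
    exact map_smul (decomposeProj gr m) c x
  proj_X_smul := decomposeProj_X_smul hX

end OfDecomposition

namespace PDG

open MvPolynomial (idealOfVars)

variable {p n : ℕ} {k : Type} [Field k]

/-- The grading of a `p`-DG module in terms of projections. -/
noncomputable def grading (M : PDG p n k) : PolyGrading (Fin n) k M.X :=
  let _ := M.internal.chooseDecomposition
  PolyGrading.ofDecomposition M.x_deg

variable {M N : PDG p n k}

theorem grading_proj_mem (m : ℤ) (x : M.X) : M.grading.proj m x ∈ M.gr m :=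
  let _ := M.internal.chooseDecomposition
  decomposeProj_mem M.gr m x

theorem grading_proj_of_mem {m : ℤ} {x : M.X} (hx : x ∈ M.gr m) : M.grading.proj m x = x :=
  let _ := M.internal.chooseDecomposition
  decomposeProj_of_mem hx

theorem isHomog_grading_iff {e : ℤ} {f : M.X →ₗ[PolyA n k] N.X} :
    M.grading.IsHomog N.grading e f ↔ ∀ m, ∀ x ∈ M.gr m, f x ∈ N.gr (m + e) := by
  refine ⟨fun hf m x hx => ?_, fun hf => PolyGrading.isHomog_of_proj_apply_proj fun m x =>
    grading_proj_of_mem (hf m _ (grading_proj_mem m x))⟩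
  rw [← grading_proj_of_mem hx, hf]
  exact grading_proj_mem _ _

theorem isHomog_grading_d (M : PDG p n k) : M.grading.IsHomog M.grading (-1) M.d :=
  isHomog_grading_iff.2 M.d_deg

theorem isBoundedAbove_grading (hM : ∃ n₀ : ℤ, ∀ m : ℤ, n₀ ≤ m → M.gr m = ⊥) :
    M.grading.IsBoundedAbove := by
  obtain ⟨n₀, hn₀⟩ := hM
  filter_upwards [Filter.eventually_ge_atTop n₀] with m hm x
  have hx := grading_proj_mem m x
  rwa [hn₀ m hm, Submodule.mem_bot] at hx

theorem IsFree.projective (hM : M.IsFree) : Module.Projective (PolyA n k) M.X := by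
  obtain ⟨ι, deg, b, -⟩ := hM
  exact Module.Projective.of_basis b

theorem dk_pow_apply (M : PDG p n k) (s : ℕ) (x : M.X) : (M.dk ^ s) x = (M.d ^ s) x := by
  rw [Module.End.pow_apply, Module.End.pow_apply]
  rfl

theorem mem_IMk_iff {x : M.X} :
    x ∈ M.IMk ↔ x ≡ 0 [SMOD (idealOfVars (Fin n) k • ⊤ : Submodule (PolyA n k) M.X)] :=
  SModEq.zero.symm

theorem mem_range_dk_pow_sup_IMk_iff {t : ℕ} {x : M.X} :
    x ∈ LinearMap.range (M.dk ^ t) ⊔ M.IMk ↔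
      ∃ w, x ≡ (M.d ^ t) w [SMOD (idealOfVars (Fin n) k • ⊤ : Submodule (PolyA n k) M.X)] := by
  simp only [Submodule.mem_sup, LinearMap.mem_range, exists_exists_eq_and, dk_pow_apply]
  refine exists_congr fun w => ⟨?_, fun h => ⟨x - (M.d ^ t) w, SModEq.sub_mem.1 h, by abel⟩⟩
  rintro ⟨z, hz, rfl⟩
  exact SModEq.sub_mem.2 (by rwa [add_sub_cancel_left])

variable {f : M.X →ₗ[PolyA n k] N.X}

theorem isHomologyInjectiveMod_iff {s t : ℕ} :
    IsHomologyInjectiveMod (idealOfVars (Fin n) k) s t M.d N.d f ↔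
      ∀ x, (M.dk ^ s) x ∈ M.IMk → f x ∈ LinearMap.range (N.dk ^ t) ⊔ N.IMk →
        x ∈ LinearMap.range (M.dk ^ t) ⊔ M.IMk := by
  simp only [IsHomologyInjectiveMod, mem_IMk_iff, mem_range_dk_pow_sup_IMk_iff, dk_pow_apply]

theorem isHomologySurjectiveMod_iff {s t : ℕ} :
    IsHomologySurjectiveMod (idealOfVars (Fin n) k) s t M.d N.d f ↔
      ∀ y, (N.dk ^ s) y ∈ N.IMk →
        ∃ x, (M.dk ^ s) x ∈ M.IMk ∧ y - f x ∈ LinearMap.range (N.dk ^ t) ⊔ N.IMk := by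
  simp only [IsHomologySurjectiveMod, mem_IMk_iff, mem_range_dk_pow_sup_IMk_iff, dk_pow_apply,
    SModEq.sub_mem, sub_sub]

end PDG

theorem stmt_17_general {p n : ℕ} (hp : p ≠ 0) {k : Type} [Field k] {M N : PDG p n k}
    [Module.Projective (PolyA n k) M.X] [Module.Projective (PolyA n k) N.X]
    (hbddM : ∃ n₀ : ℤ, ∀ m : ℤ, n₀ ≤ m → M.gr m = ⊥)
    (hbddN : ∃ n₀ : ℤ, ∀ m : ℤ, n₀ ≤ m → N.gr m = ⊥)
    {f : M.X →ₗ[PolyA n k] N.X} (hfdeg : ∀ m : ℤ, ∀ x ∈ M.gr m, f x ∈ N.gr m)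
    (hfd : f ∘ₗ M.d = N.d ∘ₗ f)
    (hinj : ∀ x : M.X, M.dk x ∈ M.IMk → f x ∈ LinearMap.range (N.dk ^ (p - 1)) ⊔ N.IMk →
      x ∈ LinearMap.range (M.dk ^ (p - 1)) ⊔ M.IMk)
    (hsurj : ∀ y : N.X, (N.dk ^ (p - 1)) y ∈ N.IMk →
      ∃ x : M.X, (M.dk ^ (p - 1)) x ∈ M.IMk ∧
        y - f x ∈ LinearMap.range N.dk ⊔ N.IMk) :
    ∃ g : N.X →ₗ[PolyA n k] M.X,
      (∀ m : ℤ, ∀ y ∈ N.gr m, g y ∈ M.gr m) ∧ g ∘ₗ N.d = M.d ∘ₗ g ∧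
      ∃ (h₁ : M.X →ₗ[PolyA n k] M.X) (h₂ : N.X →ₗ[PolyA n k] N.X),
        (∀ m : ℤ, ∀ x ∈ M.gr m, h₁ x ∈ M.gr (m + p - 1)) ∧
        (∀ m : ℤ, ∀ y ∈ N.gr m, h₂ y ∈ N.gr (m + p - 1)) ∧
        g ∘ₗ f - LinearMap.id =
          ∑ i ∈ Finset.range p, (M.d ^ (p - 1 - i)) ∘ₗ h₁ ∘ₗ (M.d ^ i) ∧
        f ∘ₗ g - LinearMap.id =
          ∑ i ∈ Finset.range p, (N.d ^ (p - 1 - i)) ∘ₗ h₂ ∘ₗ (N.d ^ i) := by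
  obtain ⟨q, rfl⟩ := Nat.exists_eq_add_one_of_ne_zero hp
  obtain ⟨g, hgdeg, hgd, ⟨h₁, hh₁deg, hh₁⟩, h₂, hh₂deg, hh₂⟩ :=
    PolyGrading.isGradedHomotopyEquiv_of_isHomologyInjectiveMod_of_isHomologySurjectiveMod
      (PDG.isBoundedAbove_grading hbddM) (PDG.isBoundedAbove_grading hbddN)
      (PDG.isHomog_grading_d M) (PDG.isHomog_grading_d N)
      (PDG.isHomog_grading_iff.2 <| by simpa only [add_zero] using hfdeg) M.d_pow N.d_pow hfd
      (PDG.isHomologyInjectiveMod_iff.2 <| by simpa only [pow_one, Nat.add_sub_cancel] using hinj)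
      (PDG.isHomologySurjectiveMod_iff.2 <| by simpa only [pow_one, Nat.add_sub_cancel] using hsurj)
  have hdeg (m : ℤ) : m + (q + 1 : ℕ) - 1 = m + q := by
    push_cast
    ring
  rw [PDG.isHomog_grading_iff] at hgdeg hh₁deg hh₂deg
  simp only [add_zero] at hgdeg
  simp only [hdeg]
  exact ⟨g, hgdeg, hgd, h₁, h₂, hh₁deg, hh₂deg, hh₁, hh₂⟩

theorem stmt_17 (p n : ℕ) (hp : p.Prime) (k : Type) [Field k] [CharP k p]
    (M N : PDG p n k) (hfreeM : M.IsFree) (hfreeN : N.IsFree)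
    (hbddM : ∃ n₀ : ℤ, ∀ m : ℤ, n₀ ≤ m → M.gr m = ⊥)
    (hbddN : ∃ n₀ : ℤ, ∀ m : ℤ, n₀ ≤ m → N.gr m = ⊥)
    (f : M.X →ₗ[PolyA n k] N.X)
    (hfdeg : ∀ m : ℤ, ∀ x ∈ M.gr m, f x ∈ N.gr m)
    (hfd : f ∘ₗ M.d = N.d ∘ₗ f)
    -- `f ⊗_A k` is injective on `ₛH` for all `1 ≤ s ≤ p-1` …
    (hinj : ∀ s : ℕ, 1 ≤ s → s ≤ p - 1 → ∀ x : M.X, (M.dk ^ s) x ∈ M.IMk →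
      f x ∈ LinearMap.range (N.dk ^ (p - s)) ⊔ N.IMk →
      x ∈ LinearMap.range (M.dk ^ (p - s)) ⊔ M.IMk)
    -- … and surjective on `ₛH` for all `1 ≤ s ≤ p-1`:
    (hsurj : ∀ s : ℕ, 1 ≤ s → s ≤ p - 1 → ∀ y : N.X, (N.dk ^ s) y ∈ N.IMk →
      ∃ x : M.X, (M.dk ^ s) x ∈ M.IMk ∧
        y - f x ∈ LinearMap.range (N.dk ^ (p - s)) ⊔ N.IMk) :
    -- then `f` is a homotopy equivalence:
    ∃ g : N.X →ₗ[PolyA n k] M.X,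
      (∀ m : ℤ, ∀ y ∈ N.gr m, g y ∈ M.gr m) ∧ g ∘ₗ N.d = M.d ∘ₗ g ∧
      ∃ (h₁ : M.X →ₗ[PolyA n k] M.X) (h₂ : N.X →ₗ[PolyA n k] N.X),
        (∀ m : ℤ, ∀ x ∈ M.gr m, h₁ x ∈ M.gr (m + p - 1)) ∧
        (∀ m : ℤ, ∀ y ∈ N.gr m, h₂ y ∈ N.gr (m + p - 1)) ∧
        g ∘ₗ f - LinearMap.id =
          ∑ i ∈ Finset.range p, (M.d ^ (p - 1 - i)) ∘ₗ h₁ ∘ₗ (M.d ^ i) ∧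
        f ∘ₗ g - LinearMap.id =
          ∑ i ∈ Finset.range p, (N.d ^ (p - 1 - i)) ∘ₗ h₂ ∘ₗ (N.d ^ i) := by
  have := hfreeM.projective
  have := hfreeN.projective
  have hp1 := Nat.le_sub_one_of_lt hp.one_lt
  exact stmt_17_general hp.ne_zero hbddM hbddN hfdeg hfd (by simpa using hinj 1 le_rfl hp1)
    (by simpa [Nat.sub_sub_self hp.one_le] using hsurj (p - 1) hp1 le_rfl)
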